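/- arXiv:1708.03452 — 2 statements merged into one kernel-verified Lean document; each statement's English description precedes it below -/
import Mathlib

section
/- Let τ, τ′ ∈ ℂ with τ ≠ 0 and τ′ ≠ 0, and set z = ![![1, 2/τ], ![0, 1]] and w = ![![1, 0], ![2·τ′, 1]] in SL(2, ℂ). If z * w⁻¹ is parabolic, i.e., (trace(z * w⁻¹))² = 4, then τ = τ′. -/
/-- If `z = !![1, 2/τ; 0, 1]` and `w = !![1, 0; 2·τ′, 1]` in `SL(2, ℂ)` with `τ, τ′ ≠ 0`,
and `z * w⁻¹` is parabolic (its trace squared equals `4`), then `τ = τ′`.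
Matrix form of Proposition 5.1: the moduli of the two adjacent cusps coincide. -/
theorem moduli_of_adjacent_cusps_coincide (τ τ' : ℂ) (hτ : τ ≠ 0) (hτ' : τ' ≠ 0)
    (z w : Matrix.SpecialLinearGroup (Fin 2) ℂ)
    (hz : (z : Matrix (Fin 2) (Fin 2) ℂ) = !![1, 2 / τ; 0, 1])
    (hw : (w : Matrix (Fin 2) (Fin 2) ℂ) = !![1, 0; 2 * τ', 1])
    (hpar : (Matrix.trace ((z * w⁻¹ : Matrix.SpecialLinearGroup (Fin 2) ℂ) :
      Matrix (Fin 2) (Fin 2) ℂ)) ^ 2 = 4) :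
    τ = τ' := by
  rw [Matrix.SpecialLinearGroup.coe_mul, Matrix.SpecialLinearGroup.coe_inv, hz, hw,
    Matrix.adjugate_fin_two_of, Matrix.trace_fin_two] at hpar
  simp [Matrix.mul_apply, Fin.sum_univ_two] at hpar
  field_simp at hpar
  have h : τ' * (τ' - τ) = 0 := by linear_combination hpar / 16
  rcases mul_eq_zero.mp h with h | h
  · exact absurd h hτ'
  · exact (sub_eq_zero.mp h).symm
end

section
/- Let τ ∈ ℂ with Im τ > 0, and set y = ![![1, 0], ![2, 1]] and z = ![![1, 2/τ], ![0, 1]] in SL(2, ℂ). If the commutator y * z * y⁻¹ * z⁻¹ is parabolic, i.e., (trace(y * z * y⁻¹ * z⁻¹))² = 4, then τ = 2·I. -/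
/-- Matrix form of Proposition 5.6: with `y = !![1, 0; 2, 1]` and `z = !![1, 2/τ; 0, 1]`
in `SL(2, ℂ)`, `Im τ > 0`, if the commutator `y * z * y⁻¹ * z⁻¹` is parabolic
(its trace squared equals `4`), then `τ = 2i`. -/
theorem parabolic_commutator_implies_modulus_two_i (τ : ℂ) (hτ : 0 < τ.im)
    (y z : Matrix.SpecialLinearGroup (Fin 2) ℂ)
    (hy : (y : Matrix (Fin 2) (Fin 2) ℂ) = !![1, 0; 2, 1])
    (hz : (z : Matrix (Fin 2) (Fin 2) ℂ) = !![1, 2 / τ; 0, 1])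
    (hpar : (Matrix.trace ((y * z * y⁻¹ * z⁻¹ : Matrix.SpecialLinearGroup (Fin 2) ℂ) :
      Matrix (Fin 2) (Fin 2) ℂ)) ^ 2 = 4) :
    τ = 2 * Complex.I := by
  have h0 : τ ≠ 0 := by
    rintro rfl
    simp at hτ
  have ht : Matrix.trace ((y * z * y⁻¹ * z⁻¹ : Matrix.SpecialLinearGroup (Fin 2) ℂ) :
      Matrix (Fin 2) (Fin 2) ℂ) = 2 + 4 * (2 / τ) ^ 2 := by
    simp only [Matrix.SpecialLinearGroup.coe_mul, Matrix.SpecialLinearGroup.coe_inv, hy, hz,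
      Matrix.adjugate_fin_two_of, Matrix.mul_fin_two, Matrix.trace_fin_two_of]
    ring
  rw [ht] at hpar
  have h1 : (τ - 2 * Complex.I) * (τ + 2 * Complex.I) = 0 := by
    field_simp at hpar
    have hI := Complex.I_sq
    linear_combination (1 / 64) * hpar - 4 * hI
  rcases mul_eq_zero.mp h1 with h | h
  · exact sub_eq_zero.mp h
  · exfalso
    have := congrArg Complex.im h
    simp at this
    linarith
end
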